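/- Let θ ∈ (0, 1/2) and q ∈ [0, 1/2). Let P = P_{T,θ} on {0,1}³ for the tree T with edge set {{1,2},{2,3}}, let P^{(q)} be its noisy version, and let y_1,…,y_n be i.i.d. samples from P^{(q)} with empirical agreement weights Â^{(q)}_{i,j}. The error probability of the maximum-weight spanning tree estimator with uniformly random tie-breaking equals Err_n^{(q)} := ℙ({Â^{(q)}_{1,3} > Â^{(q)}_{1,2}} ∪ {Â^{(q)}_{1,3} > Â^{(q)}_{2,3}}) + (1/2)·ℙ(Â^{(q)}_{2,3} > Â^{(q)}_{1,2} = Â^{(q)}_{1,3}) + (1/2)·ℙ(Â^{(q)}_{1,2} > Â^{(q)}_{2,3} = Â^{(q)}_{1,3}) + (2/3)·ℙ(Â^{(q)}_{1,2} = Â^{(q)}_{2,3} = Â^{(q)}_{1,3}), and it satisfies Err_n^{(q)} = (2f^{(q)}(n) − f̃^{(q)}(n))·(1 + o(n^{−1})); that is, n·( Err_n^{(q)} / (2f^{(q)}(n) − f̃^{(q)}(n)) − 1 ) → 0 as n → ∞. -/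

import Mathlib

open scoped Classical BigOperators
open Filter

noncomputable section

/-- Symmetric pair weight `w(x i, x j)` lifted to unordered pairs. -/
def pairWeight (θ : ℝ) {p : ℕ} (x : Fin p → Bool) : Sym2 (Fin p) → ℝ :=
  Sym2.lift ⟨fun i j => if x i = x j then 1 - θ else θ, fun i j => by
    dsimp only
    by_cases h : x i = x j
    · rw [if_pos h, if_pos h.symm]
    · rw [if_neg h, if_neg (fun hh => h hh.symm)]⟩

/-- The homogeneous zero-external-field Ising tree distribution. -/
def isingP (θ : ℝ) {p : ℕ} (T : SimpleGraph (Fin p)) (x : Fin p → Bool) : ℝ :=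
  (1 / 2) * ∏ e ∈ T.edgeFinset, pairWeight θ x e

/-- Probability of an event `A` about `n` i.i.d. samples from pmf `P`. -/
def iidProb {p : ℕ} (P : (Fin p → Bool) → ℝ) (n : ℕ)
    (A : Set (Fin n → Fin p → Bool)) : ℝ :=
  ∑ xs : Fin n → Fin p → Bool, if xs ∈ A then ∏ k, P (xs k) else 0

/-- Empirical agreement weight. -/
def Ahat {p n : ℕ} (xs : Fin n → Fin p → Bool) (i j : Fin p) : ℝ :=
  ((Finset.univ.filter (fun k : Fin n => xs k i = xs k j)).card : ℝ) / n

/-- Empirical agreement weight on unordered pairs. -/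
def AhatSym {p n : ℕ} (xs : Fin n → Fin p → Bool) : Sym2 (Fin p) → ℝ :=
  Sym2.lift ⟨fun i j => Ahat xs i j, fun i j => by
    have h : (Finset.univ.filter fun k : Fin n => xs k i = xs k j)
        = (Finset.univ.filter fun k : Fin n => xs k j = xs k i) :=
      Finset.filter_congr (fun k _ => ⟨Eq.symm, Eq.symm⟩)
    simp only [Ahat, h]⟩

/-- The path (Markov chain) tree on 3 nodes with edges {1,2},{2,3}. -/
def chainA : SimpleGraph (Fin 3) := SimpleGraph.fromEdgeSet {s(0,1), s(1,2)}

def chainB : SimpleGraph (Fin 3) := SimpleGraph.fromEdgeSet {s(0,2), s(1,2)}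

def chainC : SimpleGraph (Fin 3) := SimpleGraph.fromEdgeSet {s(0,1), s(0,2)}

def path4 : SimpleGraph (Fin 4) := SimpleGraph.fromEdgeSet {s(0,1), s(1,2), s(2,3)}

def Kexp (θ : ℝ) : ℝ := -Real.log (1 - θ * (1 - Real.sqrt (4 * θ * (1 - θ))))

def sigmaSq (θ : ℝ) : ℝ := θ * Real.sqrt (4 * θ * (1 - θ)) * Real.exp (Kexp θ)

def zTheta (θ : ℝ) : ℝ := Real.sqrt (θ / (1 - θ))

def ftilde (θ : ℝ) (n : ℕ) : ℝ :=
  Real.exp (-(n : ℝ) * Kexp θ) / Real.sqrt (2 * Real.pi * sigmaSq θ * n)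
    * (1 + (1 - 3 * sigmaSq θ) / (8 * sigmaSq θ * n))

def fn (θ : ℝ) (n : ℕ) : ℝ :=
  ftilde θ n / (1 - zTheta θ)
    * (1 - zTheta θ * (1 + zTheta θ) / (2 * (1 - zTheta θ) ^ 2 * sigmaSq θ * n))

/-- Hamming distance. -/
def hamming {p : ℕ} (x y : Fin p → Bool) : ℕ :=
  (Finset.univ.filter (fun i => x i ≠ y i)).card

/-- Noisy (BSC with crossover probability q) version of a distribution. -/
def noisy (q : ℝ) {p : ℕ} (P : (Fin p → Bool) → ℝ) (y : Fin p → Bool) : ℝ :=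
  ∑ x : Fin p → Bool, q ^ hamming x y * (1 - q) ^ (p - hamming x y) * P x

def beta1 (θ q : ℝ) : ℝ :=
  ((1 - q) ^ 3 + q ^ 3) * (θ * (1 - θ) / 2) + q * (1 - q) * ((1 - θ * (1 - θ)) / 2)

def beta2 (θ q : ℝ) : ℝ :=
  ((1 - q) ^ 3 + q ^ 3) * (θ ^ 2 / 2) + q * (1 - q) * ((1 - θ ^ 2) / 2)

def Kq (θ q : ℝ) : ℝ :=
  -Real.log (1 - 4 * ((beta1 θ q + beta2 θ q) / 2 - Real.sqrt (beta1 θ q * beta2 θ q)))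

def mu2 (θ q : ℝ) : ℝ := 4 * Real.sqrt (beta1 θ q * beta2 θ q) * Real.exp (Kq θ q)

def zq (θ q : ℝ) : ℝ := Real.sqrt (beta2 θ q / beta1 θ q)

def ftildeq (θ q : ℝ) (n : ℕ) : ℝ :=
  Real.exp (-(n : ℝ) * Kq θ q) / Real.sqrt (2 * Real.pi * mu2 θ q * n)
    * (1 + (1 - 3 * mu2 θ q) / (8 * mu2 θ q * n))

def fnq (θ q : ℝ) (n : ℕ) : ℝ :=
  ftildeq θ q n / (1 - zq θ q)
    * (1 - zq θ q * (1 + zq θ q) / (2 * (1 - zq θ q) ^ 2 * mu2 θ q * n))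

/-- Marginal of a pmf on `{0,1}^p` on a single coordinate. -/
def marg1 {p : ℕ} (Q : (Fin p → Bool) → ℝ) (i : Fin p) (a : Bool) : ℝ :=
  ∑ x ∈ Finset.univ.filter (fun x : Fin p → Bool => x i = a), Q x

/-- Marginal of a pmf on `{0,1}^p` on a pair of coordinates. -/
def marg2 {p : ℕ} (Q : (Fin p → Bool) → ℝ) (i j : Fin p) (a b : Bool) : ℝ :=
  ∑ x ∈ Finset.univ.filter (fun x : Fin p → Bool => x i = a ∧ x j = b), Q x

/-- Kullback-Leibler divergence between pmfs on a finite type. -/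
def klDiv {X : Type*} [Fintype X] (Q P : X → ℝ) : ℝ :=
  ∑ x : X, Q x * Real.log (Q x / P x)

/-- Empirical mutual information between coordinates `i` and `j`. -/
def mutInf {p : ℕ} (Q : (Fin p → Bool) → ℝ) (i j : Fin p) : ℝ :=
  ∑ a : Bool, ∑ b : Bool,
    marg2 Q i j a b * Real.log (marg2 Q i j a b / (marg1 Q i a * marg1 Q j b))

end

/-- The error probability of the MWST estimator with uniformly random tie-breaking
for the 3-node chain, from `n` noisy samples. -/
noncomputable def ErrProbQ (θ q : ℝ) (n : ℕ) : ℝ :=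
  iidProb (noisy q (isingP θ chainA)) n
      {ys | Ahat ys 0 1 < Ahat ys 0 2 ∨ Ahat ys 1 2 < Ahat ys 0 2}
    + (1 / 2) * iidProb (noisy q (isingP θ chainA)) n
      {ys | Ahat ys 0 1 < Ahat ys 1 2 ∧ Ahat ys 0 1 = Ahat ys 0 2}
    + (1 / 2) * iidProb (noisy q (isingP θ chainA)) n
      {ys | Ahat ys 1 2 < Ahat ys 0 1 ∧ Ahat ys 1 2 = Ahat ys 0 2}
    + (2 / 3) * iidProb (noisy q (isingP θ chainA)) n
      {ys | Ahat ys 0 1 = Ahat ys 1 2 ∧ Ahat ys 1 2 = Ahat ys 0 2}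

/-!
Up to the factor `n`, the differences of the empirical weights are two integer walks, the gaps
between the non-edge `{0, 2}` and each edge of the chain, and the error probability is the mean of
a loss of the pair of end points. That loss is the sum of the half-steps (`1` for a positive gap,
`1 / 2` for a tie) of the two gaps unless the gaps have nonnegative sum, an event whose probability
is, by Chernoff's bound, exponentially smaller than `exp (-n K)`. Exchanging the nodes `0` and `2`
shows that the two half-steps have the same mean, so the leading term is twice the mean half-step
of one gap.

Tilting the law of a sample by `z ^ (-gap)` gives a measure of total mass `exp (-K)` under which
the gap is the symmetric lazy walk `D` with jump probability `μ₂`, so that twice the mean half-step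
is `exp (-n K) * E[z ^ |D n|]`. Since the `z ^ |k|` are the Fourier coefficients of the Poisson
kernel `K_z`, this expectation is `(2π)⁻¹ ∫ φ ^ n K_z` over `[-π, π]`, with `φ` the characteristic
function of one step. Laplace's method with one correction term then gives an expansion to relative
order `1 / n`, and `2 f - f̃` has the same one.
-/

open scoped Topology Real
open Asymptotics MeasureTheory

/-- `f n = a + b / n + o(1 / n)` as `n → ∞`. -/
def HasFirstOrderExpansion (f : ℕ → ℝ) (a b : ℝ) : Prop :=
  Tendsto (fun n : ℕ => (n : ℝ) * (f n - a)) atTop (𝓝 b)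

namespace HasFirstOrderExpansion

variable {f g : ℕ → ℝ} {a b c d : ℝ}

theorem tendsto (hf : HasFirstOrderExpansion f a b) : Tendsto f atTop (𝓝 a) := by
  have hsub : Tendsto (fun n : ℕ => (n : ℝ)⁻¹ * (n * (f n - a))) atTop (𝓝 (0 * b)) :=
    tendsto_inv_atTop_nhds_zero_nat.mul hf
  rw [zero_mul] at hsub
  refine tendsto_sub_nhds_zero_iff.mp (hsub.congr' ?_)
  filter_upwards [eventually_ne_atTop 0] with n hn
  field_simp

theorem congr' (hf : HasFirstOrderExpansion f a b) (hfg : f =ᶠ[atTop] g) :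
    HasFirstOrderExpansion g a b :=
  Tendsto.congr' (hfg.mono fun n hn => by simp only [hn]) hf

theorem mul (hf : HasFirstOrderExpansion f a b) (hg : HasFirstOrderExpansion g c d) :
    HasFirstOrderExpansion (fun n => f n * g n) (a * c) (b * c + a * d) :=
  ((Tendsto.mul hf hg.tendsto).add (Tendsto.const_mul a hg)).congr fun n => by ring

theorem const_mul (c : ℝ) (hf : HasFirstOrderExpansion f a b) :
    HasFirstOrderExpansion (fun n => c * f n) (c * a) (c * b) :=
  (Tendsto.const_mul c hf).congr fun n => by ring

theorem of_tendsto_mul_sub (hf : HasFirstOrderExpansion f a b)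
    (hgf : Tendsto (fun n : ℕ => (n : ℝ) * (g n - f n)) atTop (𝓝 0)) :
    HasFirstOrderExpansion g a b := by
  have hsum := Tendsto.add hf hgf
  rw [add_zero] at hsum
  exact hsum.congr fun n => by ring

theorem div_of_same (hf : HasFirstOrderExpansion f a b) (hg : HasFirstOrderExpansion g a b)
    (ha : a ≠ 0) : Tendsto (fun n : ℕ => (n : ℝ) * (f n / g n - 1)) atTop (𝓝 0) := by
  have hquot : Tendsto (fun n : ℕ => ((n : ℝ) * (f n - a) - n * (g n - a)) / g n)
      atTop (𝓝 ((b - b) / a)) := (hf.sub hg).div hg.tendsto ha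
  rw [sub_self, zero_div] at hquot
  refine hquot.congr' ?_
  filter_upwards [hg.tendsto.eventually_ne ha] with n hn
  field_simp
  ring

end HasFirstOrderExpansion

theorem hasFirstOrderExpansion_add_div (a b : ℝ) :
    HasFirstOrderExpansion (fun n => a + b / n) a b := by
  refine tendsto_const_nhds.congr' ?_
  filter_upwards [eventually_ne_atTop 0] with n hn
  field_simp
  ring

theorem hasFirstOrderExpansion_pow {u : ℕ → ℝ} {L : ℝ}
    (hu : Tendsto (fun n : ℕ => (n : ℝ) ^ 2 * (u n - 1)) atTop (𝓝 L)) :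
    HasFirstOrderExpansion (fun n => u n ^ n) 1 L := by
  have hnu : Tendsto (fun n : ℕ => (n : ℝ) * (u n - 1)) atTop (𝓝 0) := by
    refine HasFirstOrderExpansion.tendsto (b := L) (hu.congr fun n => ?_)
    ring
  have hu_lim : Tendsto u atTop (𝓝 1) := HasFirstOrderExpansion.tendsto hnu
  have hlog : Tendsto (fun n : ℕ => (n : ℝ) ^ 2 * Real.log (u n)) atTop (𝓝 L) := by
    have hderiv := (Real.hasDerivAt_log one_ne_zero).hasFDerivAt.hasFDerivWithinAt (s := Set.univ)
    simpa using hderiv.lim (tendsto_sub_nhds_zero_iff.mpr hu_lim) (by simp) hu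
  have hnlog : Tendsto (fun n : ℕ => (n : ℝ) * Real.log (u n)) atTop (𝓝 0) := by
    refine HasFirstOrderExpansion.tendsto (b := L) (hlog.congr fun n => ?_)
    ring
  have hexp : Tendsto (fun n : ℕ => (n : ℝ) * (Real.exp (n * Real.log (u n)) - 1))
      atTop (𝓝 L) := by
    have hderiv := (Real.hasDerivAt_exp 0).hasFDerivAt.hasFDerivWithinAt (s := Set.univ)
    simpa using hderiv.lim (c := fun n : ℕ => (n : ℝ)) hnlog (by simp)
      (hlog.congr fun n => by rw [smul_eq_mul]; ring)
  refine hexp.congr' ?_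
  filter_upwards [hu_lim.eventually_const_lt one_pos] with n hn
  rw [← Real.log_pow, Real.exp_log (pow_pos hn n)]

/-! ### Laplace's method with a correction term -/

theorem integrable_pow_mul_exp_neg_mul_sq {b : ℝ} (hb : 0 < b) (k : ℕ) :
    Integrable fun x : ℝ => x ^ k * Real.exp (-b * x ^ 2) := by
  simpa using integrable_rpow_mul_exp_neg_mul_sq hb (neg_one_lt_zero.trans_le (Nat.cast_nonneg k))

theorem integral_pow_add_two_mul_exp_neg_mul_sq {b : ℝ} (hb : 0 < b) (k : ℕ) :
    ∫ x : ℝ, x ^ (k + 2) * Real.exp (-b * x ^ 2) =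
      (k + 1) / (2 * b) * ∫ x : ℝ, x ^ k * Real.exp (-b * x ^ 2) := by
  have hderiv (x : ℝ) : HasDerivAt (fun x : ℝ => -(1 / (2 * b)) * Real.exp (-b * x ^ 2))
      (x * Real.exp (-b * x ^ 2)) x := by
    refine (((hasDerivAt_pow 2 x).const_mul (-b)).exp.const_mul (-(1 / (2 * b)))).congr_deriv ?_
    push_cast
    field_simp
  have hmoment (j : ℕ) := integrable_pow_mul_exp_neg_mul_sq hb j
  have hparts := integral_mul_deriv_eq_deriv_mul_of_integrable
    (u := fun x : ℝ => x ^ (k + 1)) (u' := fun x => (k + 1) * x ^ k)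
    (fun x _ => by simpa using hasDerivAt_pow (k + 1) x) (fun x _ => hderiv x)
    ((hmoment (k + 2)).congr (.of_forall fun x => by simp only [Pi.mul_apply]; ring))
    (((hmoment k).const_mul (-((k + 1) / (2 * b)))).congr
      (.of_forall fun x => by simp only [Pi.mul_apply]; ring))
    (((hmoment (k + 1)).const_mul (-(1 / (2 * b)))).congr
      (.of_forall fun x => by simp only [Pi.mul_apply]; ring))
  calc ∫ x : ℝ, x ^ (k + 2) * Real.exp (-b * x ^ 2)
      = ∫ x : ℝ, x ^ (k + 1) * (x * Real.exp (-b * x ^ 2)) := by congr with x; ring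
    _ = -∫ x : ℝ, (k + 1) * x ^ k * (-(1 / (2 * b)) * Real.exp (-b * x ^ 2)) := hparts
    _ = -∫ x : ℝ, -((k + 1) / (2 * b)) * (x ^ k * Real.exp (-b * x ^ 2)) := by
      congr with x; ring
    _ = (k + 1) / (2 * b) * ∫ x : ℝ, x ^ k * Real.exp (-b * x ^ 2) := by
      rw [integral_const_mul]; ring

theorem integral_exp_neg_half_mul_sq (μ : ℝ) :
    ∫ x : ℝ, Real.exp (-(μ / 2) * x ^ 2) = √(2 * π / μ) := by
  rw [integral_gaussian]
  congr 1
  field_simp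

theorem integral_sq_mul_exp_neg_half_mul_sq {μ : ℝ} (hμ : 0 < μ) :
    ∫ x : ℝ, x ^ 2 * Real.exp (-(μ / 2) * x ^ 2) = √(2 * π / μ) / μ := by
  have hrec := integral_pow_add_two_mul_exp_neg_mul_sq (half_pos hμ) 0
  simp only [zero_add, pow_zero, one_mul] at hrec
  rw [hrec, integral_exp_neg_half_mul_sq]
  simp only [Nat.cast_zero, zero_add]
  field_simp

theorem integral_pow_four_mul_exp_neg_half_mul_sq {μ : ℝ} (hμ : 0 < μ) :
    ∫ x : ℝ, x ^ 4 * Real.exp (-(μ / 2) * x ^ 2) = 3 * √(2 * π / μ) / μ ^ 2 := by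
  rw [integral_pow_add_two_mul_exp_neg_mul_sq (half_pos hμ) 2,
    integral_sq_mul_exp_neg_half_mul_sq hμ]
  field_simp
  norm_num

theorem exists_abs_le_mul_pow_of_isBigO {f : ℝ → ℝ} {k : ℕ} (hf : Continuous f)
    (hO : f =O[𝓝 0] fun t => t ^ k) (R : ℝ) :
    ∃ B, 0 ≤ B ∧ ∀ t, |t| ≤ R → |f t| ≤ B * |t| ^ k := by
  obtain ⟨C, hC⟩ := hO.bound
  obtain ⟨δ, hδ, hnear⟩ := Metric.eventually_nhds_iff.mp hC
  obtain ⟨M, hM⟩ := (isCompact_Icc (a := -R) (b := R)).exists_bound_of_continuousOn hf.continuousOn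
  refine ⟨max (max C (M / δ ^ k)) 0, le_max_right _ _, fun t ht => ?_⟩
  rcases lt_or_ge |t| δ with hlt | hge
  · calc |f t| ≤ C * |t| ^ k := by simpa using hnear (by simpa using hlt)
      _ ≤ _ := by gcongr; exact (le_max_left _ _).trans (le_max_left _ _)
  · have hft : |f t| ≤ M := hM t (abs_le.mp ht)
    calc |f t| ≤ M := hft
      _ = M / δ ^ k * δ ^ k := by field_simp
      _ ≤ M / δ ^ k * |t| ^ k := by
        have : 0 ≤ M := (abs_nonneg _).trans hft
        gcongr
      _ ≤ _ := by gcongr; exact (le_max_right _ _).trans (le_max_left _ _)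

theorem tendsto_pow_mul_comp_div_sqrt {f : ℝ → ℝ} {γ : ℝ} {k : ℕ}
    (hf : (fun t => f t - γ * t ^ (2 * k)) =o[𝓝 0] fun t => t ^ (2 * k)) (x : ℝ) :
    Tendsto (fun n : ℕ => (n : ℝ) ^ k * f (x / √n)) atTop (𝓝 (γ * x ^ (2 * k))) := by
  have hscale : Tendsto (fun n : ℕ => x / √(n : ℝ)) atTop (𝓝 0) :=
    tendsto_const_nhds.div_atTop (Real.tendsto_sqrt_atTop.comp tendsto_natCast_atTop_atTop)
  have hpow : ∀ᶠ n : ℕ in atTop, (n : ℝ) ^ k * (x / √n) ^ (2 * k) = x ^ (2 * k) := by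
    filter_upwards [eventually_ne_atTop 0] with n hn
    rw [pow_mul, div_pow, Real.sq_sqrt n.cast_nonneg, div_pow, ← pow_mul]
    field_simp
  have hsmall := (isBigO_refl (fun n : ℕ => (n : ℝ) ^ k) atTop).mul_isLittleO
    (hf.comp_tendsto hscale)
  have hconst := (hsmall.trans_eventuallyEq hpow).trans_isBigO (isBigO_const_one ℝ _ _)
  refine tendsto_sub_nhds_zero_iff.mp (((isLittleO_one_iff ℝ).mp hconst).congr' ?_)
  filter_upwards [hpow] with n hn
  simp only [Function.comp_apply]
  linear_combination -γ * hn

/-- The integrand of `∫ t in -R..R, φ t ^ n * H t` after the substitution `t = x / √n`,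
extended by zero to the whole line. -/
noncomputable def rescaledIntegrand (φ H : ℝ → ℝ) (R : ℝ) (n : ℕ) : ℝ → ℝ :=
  (Set.Ioc (-(R * √n)) (R * √n)).indicator fun x => φ (x / √n) ^ n * H (x / √n)

section Laplace

variable {φ H : ℝ → ℝ} {R μ γ h c : ℝ}

theorem sqrt_mul_integral_pow_mul (φ H : ℝ → ℝ) (hR : 0 ≤ R) {n : ℕ} (hn : n ≠ 0) :
    √n * ∫ t in -R..R, φ t ^ n * H t = ∫ x, rescaledIntegrand φ H R n x := by
  have hsqrt : √(n : ℝ) ≠ 0 := by positivity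
  have hsubst := intervalIntegral.integral_comp_div (a := -(R * √n)) (b := R * √n)
    (fun t => φ t ^ n * H t) hsqrt
  rw [neg_div, mul_div_cancel_right₀ R hsqrt, smul_eq_mul] at hsubst
  rw [← hsubst, intervalIntegral.integral_of_le (by linarith [mul_nonneg hR (Real.sqrt_nonneg n)]),
    ← integral_indicator measurableSet_Ioc]
  rfl

theorem hasFirstOrderExpansion_comp_div_sqrt_pow
    (hφ : (fun t => φ t - Real.exp (-(μ / 2) * t ^ 2) - γ * t ^ 4) =o[𝓝 0] fun t => t ^ 4)
    (x : ℝ) :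
    HasFirstOrderExpansion (fun n => φ (x / √n) ^ n) (Real.exp (-(μ / 2) * x ^ 2))
      (Real.exp (-(μ / 2) * x ^ 2) * (γ * x ^ 4)) := by
  have hdiff := tendsto_pow_mul_comp_div_sqrt (k := 2) hφ x
  have hexp : Tendsto (fun n : ℕ => Real.exp (μ / 2 * (x ^ 2 / n))) atTop (𝓝 1) := by
    have hzero := (tendsto_const_div_atTop_nhds_zero_nat (x ^ 2)).const_mul (μ / 2)
    rw [mul_zero] at hzero
    simpa using hzero.rexp
  have hratio : HasFirstOrderExpansion
      (fun n => (φ (x / √n) * Real.exp (μ / 2 * (x ^ 2 / n))) ^ n) 1 (γ * x ^ 4) := by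
    refine hasFirstOrderExpansion_pow ?_
    have hprod := hdiff.mul hexp
    rw [mul_one] at hprod
    refine hprod.congr fun n => ?_
    have hcancel : Real.exp (-(μ / 2) * (x / √n) ^ 2) * Real.exp (μ / 2 * (x ^ 2 / n)) = 1 := by
      rw [← Real.exp_add, div_pow, Real.sq_sqrt n.cast_nonneg, neg_mul, neg_add_cancel,
        Real.exp_zero]
    linear_combination -(n : ℝ) ^ 2 * hcancel
  have hscaled := hratio.const_mul (Real.exp (-(μ / 2) * x ^ 2))
  rw [mul_one] at hscaled
  refine hscaled.congr' ?_
  filter_upwards [eventually_ne_atTop 0] with n hn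
  rw [mul_pow, ← Real.exp_nat_mul, mul_left_comm, ← Real.exp_add]
  field_simp
  simp

theorem hasFirstOrderExpansion_rescaledIntegrand (hR : 0 < R)
    (hφ : (fun t => φ t - Real.exp (-(μ / 2) * t ^ 2) - γ * t ^ 4) =o[𝓝 0] fun t => t ^ 4)
    (hH : (fun t => H t - H 0 - h * t ^ 2) =o[𝓝 0] fun t => t ^ 2) (x : ℝ) :
    HasFirstOrderExpansion (fun n => rescaledIntegrand φ H R n x)
      (Real.exp (-(μ / 2) * x ^ 2) * H 0)
      (H 0 * γ * (x ^ 4 * Real.exp (-(μ / 2) * x ^ 2))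
        + h * (x ^ 2 * Real.exp (-(μ / 2) * x ^ 2))) := by
  have hHx : HasFirstOrderExpansion (fun n => H (x / √n)) (H 0) (h * x ^ 2) := by
    simpa only [HasFirstOrderExpansion, pow_one] using tendsto_pow_mul_comp_div_sqrt (k := 1) hH x
  have hprod := (hasFirstOrderExpansion_comp_div_sqrt_pow hφ x).mul hHx
  rw [show Real.exp (-(μ / 2) * x ^ 2) * (γ * x ^ 4) * H 0
      + Real.exp (-(μ / 2) * x ^ 2) * (h * x ^ 2)
      = H 0 * γ * (x ^ 4 * Real.exp (-(μ / 2) * x ^ 2))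
        + h * (x ^ 2 * Real.exp (-(μ / 2) * x ^ 2)) by ring] at hprod
  refine hprod.congr' ?_
  have hwide : Tendsto (fun n : ℕ => R * √(n : ℝ)) atTop atTop :=
    (Real.tendsto_sqrt_atTop.comp tendsto_natCast_atTop_atTop).const_mul_atTop hR
  filter_upwards [hwide.eventually_gt_atTop |x|] with n hn
  have hmem : x ∈ Set.Ioc (-(R * √n)) (R * √n) := ⟨(abs_lt.mp hn).1, (abs_lt.mp hn).2.le⟩
  rw [rescaledIntegrand, Set.indicator_of_mem hmem]

theorem abs_pow_sub_exp_pow_le {a t B : ℝ} {n : ℕ} (hc : 0 ≤ c) (hcμ : c ≤ μ / 2) (ht : |t| ≤ R)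
    (ha : |a| ≤ Real.exp (-c * t ^ 2))
    (hclose : |a - Real.exp (-(μ / 2) * t ^ 2)| ≤ B * t ^ 4) :
    |a ^ n - Real.exp (-(μ / 2) * t ^ 2) ^ n|
      ≤ B * t ^ 4 * n * (Real.exp (c * R ^ 2) * Real.exp (-c * (n * t ^ 2))) := by
  have hmax : max |a| |Real.exp (-(μ / 2) * t ^ 2)| ≤ Real.exp (-c * t ^ 2) := by
    refine max_le ha ?_
    rw [Real.abs_exp]
    gcongr
  have hsq : t ^ 2 ≤ R ^ 2 := sq_le_sq' (abs_le.mp ht).1 (abs_le.mp ht).2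
  have hpow : Real.exp (-c * t ^ 2) ^ (n - 1)
      ≤ Real.exp (c * R ^ 2) * Real.exp (-c * (n * t ^ 2)) := by
    rw [← Real.exp_nat_mul, ← Real.exp_add, Real.exp_le_exp]
    have hn : (n : ℝ) ≤ (n - 1 : ℕ) + 1 := by exact_mod_cast le_tsub_add
    nlinarith [mul_nonneg hc (sq_nonneg t), mul_le_mul_of_nonneg_left hsq hc]
  have hBn : 0 ≤ B * t ^ 4 * n := mul_nonneg ((abs_nonneg _).trans hclose) n.cast_nonneg
  calc |a ^ n - Real.exp (-(μ / 2) * t ^ 2) ^ n|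
      ≤ |a - Real.exp (-(μ / 2) * t ^ 2)| * n
          * max |a| |Real.exp (-(μ / 2) * t ^ 2)| ^ (n - 1) := abs_pow_sub_pow_le _ _ n
    _ ≤ B * t ^ 4 * n * Real.exp (-c * t ^ 2) ^ (n - 1) := by gcongr
    _ ≤ _ := mul_le_mul_of_nonneg_left hpow hBn

theorem mul_abs_pow_mul_sub_le {B B' M : ℝ} (hc : 0 ≤ c) (hcμ : c ≤ μ / 2)
    (hdecay : ∀ t, |t| ≤ R → |φ t| ≤ Real.exp (-c * t ^ 2))
    (hB : ∀ t, |t| ≤ R → |φ t - Real.exp (-(μ / 2) * t ^ 2)| ≤ B * t ^ 4)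
    (hB' : ∀ t, |t| ≤ R → |H t - H 0| ≤ B' * t ^ 2) (hM : ∀ t, |t| ≤ R → |H t| ≤ M)
    {t : ℝ} (ht : |t| ≤ R) (n : ℕ) :
    n * |φ t ^ n * H t - Real.exp (-(μ / 2) * t ^ 2) ^ n * H 0|
      ≤ (B * Real.exp (c * R ^ 2) * M * (n * t ^ 2) ^ 2 + B' * (n * t ^ 2))
        * Real.exp (-c * (n * t ^ 2)) := by
  have hpow := abs_pow_sub_exp_pow_le (n := n) hc hcμ ht (hdecay t ht) (hB t ht)
  have hgauss : Real.exp (-(μ / 2) * t ^ 2) ^ n ≤ Real.exp (-c * (n * t ^ 2)) := by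
    rw [← Real.exp_nat_mul, Real.exp_le_exp]
    nlinarith [mul_le_mul_of_nonneg_right hcμ (by positivity : 0 ≤ n * t ^ 2)]
  calc n * |φ t ^ n * H t - Real.exp (-(μ / 2) * t ^ 2) ^ n * H 0|
      = n * |(φ t ^ n - Real.exp (-(μ / 2) * t ^ 2) ^ n) * H t
          + Real.exp (-(μ / 2) * t ^ 2) ^ n * (H t - H 0)| := by ring_nf
    _ ≤ n * (|φ t ^ n - Real.exp (-(μ / 2) * t ^ 2) ^ n| * |H t|
          + Real.exp (-(μ / 2) * t ^ 2) ^ n * |H t - H 0|) := by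
      gcongr
      refine (abs_add_le _ _).trans_eq ?_
      rw [abs_mul, abs_mul, abs_of_nonneg (a := Real.exp _ ^ n) (by positivity)]
    _ ≤ n * (B * t ^ 4 * n * (Real.exp (c * R ^ 2) * Real.exp (-c * (n * t ^ 2))) * M
          + Real.exp (-c * (n * t ^ 2)) * (B' * t ^ 2)) := by
      gcongr
      · exact (abs_nonneg _).trans hpow
      · exact hM t ht
      · exact hB' t ht
    _ = _ := by ring

theorem natCast_mul_sq_le_sq_of_notMem_Ioc (hR : 0 ≤ R) {n : ℕ} {x : ℝ}
    (hx : x ∉ Set.Ioc (-(R * √n)) (R * √n)) : n * R ^ 2 ≤ x ^ 2 := by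
  have hle : R * √n ≤ |x| := by
    contrapose! hx
    exact ⟨(abs_lt.mp hx).1, (abs_lt.mp hx).2.le⟩
  calc n * R ^ 2 = (R * √n) ^ 2 := by rw [mul_pow, Real.sq_sqrt n.cast_nonneg, mul_comm]
    _ ≤ |x| ^ 2 := by gcongr
    _ = x ^ 2 := sq_abs x

theorem exists_forall_abs_mul_rescaledIntegrand_sub_le (hR : 0 < R) (hc : 0 ≤ c)
    (hcμ : c ≤ μ / 2) (hφc : Continuous φ) (hHc : Continuous H)
    (hφ : (fun t => φ t - Real.exp (-(μ / 2) * t ^ 2)) =O[𝓝 0] fun t => t ^ 4)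
    (hH : (fun t => H t - H 0) =O[𝓝 0] fun t => t ^ 2)
    (hdecay : ∀ t, |t| ≤ R → |φ t| ≤ Real.exp (-c * t ^ 2)) :
    ∃ A A' : ℝ, ∀ (n : ℕ) (x : ℝ),
      |n * (rescaledIntegrand φ H R n x - Real.exp (-(μ / 2) * x ^ 2) * H 0)|
        ≤ A * (x ^ 4 * Real.exp (-c * x ^ 2)) + A' * (x ^ 2 * Real.exp (-c * x ^ 2)) := by
  obtain ⟨B, hB0, hB⟩ := exists_abs_le_mul_pow_of_isBigO (by fun_prop) hφ R
  obtain ⟨B', hB'0, hB'⟩ := exists_abs_le_mul_pow_of_isBigO (by fun_prop) hH R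
  obtain ⟨M, hM0, hM⟩ := exists_abs_le_mul_pow_of_isBigO (k := 0) hHc
    (by simpa using hHc.continuousAt.norm.isBoundedUnder_le.isBigO_one ℝ) R
  simp only [(by decide : Even 4).pow_abs, sq_abs, pow_zero, mul_one] at hB hB' hM
  refine ⟨B * Real.exp (c * R ^ 2) * M, B' + |H 0| / R ^ 2, fun n x => ?_⟩
  have hA4 : 0 ≤ B * Real.exp (c * R ^ 2) * M * (x ^ 4 * Real.exp (-c * x ^ 2)) := by positivity
  have hA2 : 0 ≤ B' * (x ^ 2 * Real.exp (-c * x ^ 2)) := by positivity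
  rw [abs_mul, Nat.abs_cast]
  by_cases hx : x ∈ Set.Ioc (-(R * √n)) (R * √n)
  · have hsqrt : 0 < √(n : ℝ) := by nlinarith [hx.1.trans_le hx.2]
    have hnx : n * (x / √n) ^ 2 = x ^ 2 := by
      rw [div_pow, Real.sq_sqrt n.cast_nonneg, mul_div_cancel₀ _ (Real.sqrt_pos.mp hsqrt).ne']
    have ht : |x / √n| ≤ R := by
      rw [abs_div, abs_of_pos hsqrt, div_le_iff₀ hsqrt]
      exact abs_le.mpr ⟨hx.1.le, hx.2⟩
    have hbound := mul_abs_pow_mul_sub_le hc hcμ hdecay hB hB' hM ht n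
    rw [← Real.exp_nat_mul, mul_left_comm, hnx] at hbound
    rw [rescaledIntegrand, Set.indicator_of_mem hx]
    have hH0 : 0 ≤ |H 0| / R ^ 2 * (x ^ 2 * Real.exp (-c * x ^ 2)) := by positivity
    linarith
  · have hexp : Real.exp (-(μ / 2) * x ^ 2) ≤ Real.exp (-c * x ^ 2) := by gcongr
    have hn : (n : ℝ) ≤ x ^ 2 / R ^ 2 :=
      (le_div_iff₀ (by positivity)).mpr (natCast_mul_sq_le_sq_of_notMem_Ioc hR.le hx)
    rw [rescaledIntegrand, Set.indicator_of_notMem hx, zero_sub, abs_neg, abs_mul, Real.abs_exp]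
    have hH0 : n * (Real.exp (-(μ / 2) * x ^ 2) * |H 0|)
        ≤ x ^ 2 / R ^ 2 * (Real.exp (-c * x ^ 2) * |H 0|) := by gcongr
    linarith [show x ^ 2 / R ^ 2 * (Real.exp (-c * x ^ 2) * |H 0|)
      = |H 0| / R ^ 2 * (x ^ 2 * Real.exp (-c * x ^ 2)) by ring]

theorem integrable_rescaledIntegrand (hφc : Continuous φ) (hHc : Continuous H) (n : ℕ) :
    Integrable (rescaledIntegrand φ H R n) := by
  refine (integrable_indicator_iff measurableSet_Ioc).mpr ?_
  refine Continuous.integrableOn_Ioc ?_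
  fun_prop

theorem hasFirstOrderExpansion_sqrt_mul_integral_pow_mul (hR : 0 < R) (hμ : 0 < μ) (hc : 0 < c)
    (hφc : Continuous φ) (hHc : Continuous H)
    (hφ : (fun t => φ t - Real.exp (-(μ / 2) * t ^ 2) - γ * t ^ 4) =o[𝓝 0] fun t => t ^ 4)
    (hH : (fun t => H t - H 0 - h * t ^ 2) =o[𝓝 0] fun t => t ^ 2)
    (hdecay : ∀ t, |t| ≤ R → |φ t| ≤ Real.exp (-c * t ^ 2)) :
    HasFirstOrderExpansion (fun n => √n * ∫ t in -R..R, φ t ^ n * H t)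
      (√(2 * π / μ) * H 0) (√(2 * π / μ) * (H 0 * γ * (3 / μ ^ 2) + h / μ)) := by
  set c' := min c (μ / 2)
  have hc'0 : 0 < c' := lt_min hc (half_pos hμ)
  obtain ⟨A, A', hdom⟩ := exists_forall_abs_mul_rescaledIntegrand_sub_le (c := c') hR hc'0.le
    (min_le_right _ _) hφc hHc
    ((hφ.isBigO.add (isBigO_const_mul_self γ _ _)).congr_left fun t => by ring)
    ((hH.isBigO.add (isBigO_const_mul_self h _ _)).congr_left fun t => by ring)
    (fun t ht => (hdecay t ht).trans (by gcongr; exact min_le_left _ _))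
  have hgauss (k : ℕ) := integrable_pow_mul_exp_neg_mul_sq (half_pos hμ) k
  have hgauss0 : Integrable fun x : ℝ => Real.exp (-(μ / 2) * x ^ 2) := by simpa using hgauss 0
  have hlim := tendsto_integral_of_dominated_convergence
    (fun x => A * (x ^ 4 * Real.exp (-c' * x ^ 2)) + A' * (x ^ 2 * Real.exp (-c' * x ^ 2)))
    (fun n => (((integrable_rescaledIntegrand (R := R) hφc hHc n).sub
      (hgauss0.mul_const (H 0))).const_mul (n : ℝ)).aestronglyMeasurable)
    (((integrable_pow_mul_exp_neg_mul_sq hc'0 4).const_mul A).add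
      ((integrable_pow_mul_exp_neg_mul_sq hc'0 2).const_mul A'))
    (fun n => .of_forall (hdom n))
    (.of_forall (hasFirstOrderExpansion_rescaledIntegrand hR hφ hH))
  rw [integral_add ((hgauss 4).const_mul _) ((hgauss 2).const_mul _), integral_const_mul,
    integral_const_mul, integral_pow_four_mul_exp_neg_half_mul_sq hμ,
    integral_sq_mul_exp_neg_half_mul_sq hμ] at hlim
  rw [show √(2 * π / μ) * (H 0 * γ * (3 / μ ^ 2) + h / μ)
    = H 0 * γ * (3 * √(2 * π / μ) / μ ^ 2) + h * (√(2 * π / μ) / μ) by ring]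
  refine hlim.congr' ?_
  filter_upwards [eventually_ne_atTop 0] with n hn
  simp only [Pi.sub_apply]
  rw [integral_const_mul, integral_sub (integrable_rescaledIntegrand hφc hHc n)
    (hgauss0.mul_const _), integral_mul_const, integral_exp_neg_half_mul_sq,
    sqrt_mul_integral_pow_mul φ H hR.le hn]

end Laplace

/-! ### The lazy walk and the Poisson kernel -/

theorem cos_sub_taylor_two_isLittleO :
    (fun t : ℝ => Real.cos t - (1 - t ^ 2 / 2)) =o[𝓝 0] fun t => t ^ 2 := by
  have htaylor := taylor_isLittleO_univ (x₀ := 0) (n := 2) Real.contDiff_cos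
  simpa [taylorWithinEval_succ, iteratedDerivWithin_univ, iteratedDeriv_succ', ← sub_eq_add_neg,
    div_eq_inv_mul, show (1 + 1 : ℝ)⁻¹ = 2⁻¹ by norm_num] using htaylor

theorem cos_sub_taylor_four_isLittleO :
    (fun t : ℝ => Real.cos t - (1 - t ^ 2 / 2 + t ^ 4 / 24)) =o[𝓝 0] fun t => t ^ 4 := by
  have htaylor := taylor_isLittleO_univ (x₀ := 0) (n := 4) Real.contDiff_cos
  simpa [taylorWithinEval_succ, iteratedDerivWithin_univ, iteratedDeriv_succ', ← sub_eq_add_neg,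
    div_eq_inv_mul, Nat.factorial, show (1 + 1 : ℝ)⁻¹ = 2⁻¹ by norm_num,
    show (6⁻¹ * (3 + 1)⁻¹ : ℝ) = 24⁻¹ by norm_num] using htaylor

theorem exp_neg_half_mul_sq_sub_taylor_isLittleO (μ : ℝ) :
    (fun t : ℝ => Real.exp (-(μ / 2) * t ^ 2) - (1 - μ / 2 * t ^ 2 + μ ^ 2 / 8 * t ^ 4))
      =o[𝓝 0] fun t => t ^ 4 := by
  have hsq : Tendsto (fun t : ℝ => -(μ / 2) * t ^ 2) (𝓝 0) (𝓝 0) :=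
    Continuous.tendsto' (by fun_prop) _ _ (by simp)
  have hexp := (Real.exp_sub_sum_range_succ_isLittleO_pow 2).comp_tendsto hsq
  have hpow : (fun t : ℝ => (-(μ / 2) * t ^ 2) ^ 2) =O[𝓝 0] fun t => t ^ 4 :=
    (isBigO_const_mul_self ((μ / 2) ^ 2) _ _).congr_left fun t => by ring
  refine (hexp.trans_isBigO hpow).congr_left fun t => ?_
  simp only [Function.comp_apply, Finset.sum_range_succ, Finset.sum_range_zero, Nat.factorial]
  push_cast
  ring

/-- The characteristic function `t ↦ 1 - μ + μ cos t` of the lazy random walk step that takes the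
values `±1` with probability `μ / 2` each. -/
noncomputable def lazyWalkCharFun (μ t : ℝ) : ℝ := 1 - μ + μ * Real.cos t

theorem continuous_lazyWalkCharFun (μ : ℝ) : Continuous (lazyWalkCharFun μ) := by
  unfold lazyWalkCharFun
  fun_prop

theorem lazyWalkCharFun_sub_gaussian_isLittleO (μ : ℝ) :
    (fun t => lazyWalkCharFun μ t - Real.exp (-(μ / 2) * t ^ 2) - (μ / 24 - μ ^ 2 / 8) * t ^ 4)
      =o[𝓝 0] fun t => t ^ 4 :=
  ((cos_sub_taylor_four_isLittleO.const_mul_left μ).sub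
    (exp_neg_half_mul_sq_sub_taylor_isLittleO μ)).congr_left fun t => by
      simp only [lazyWalkCharFun]; ring

theorem abs_lazyWalkCharFun_le {μ t : ℝ} (hμ0 : 0 ≤ μ) (hμ1 : μ ≤ 1) (ht : |t| ≤ π) :
    |lazyWalkCharFun μ t| ≤ Real.exp (-(2 * μ * (1 - μ) / π ^ 2) * t ^ 2) := by
  obtain ⟨r, hr⟩ : ∃ r, r = t ^ 2 / π ^ 2 := ⟨_, rfl⟩
  have hr0 : 0 ≤ r := hr ▸ by positivity
  have hr1 : r ≤ 1 := by
    rw [hr, div_le_one (by positivity)]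
    exact sq_le_sq' (abs_le.mp ht).1 (abs_le.mp ht).2
  have hcos : Real.cos t ≤ 1 - 2 * r := by
    convert Real.cos_le_one_sub_mul_cos_sq ht using 2
    rw [hr]
    ring
  have hμr : 0 ≤ μ * r := mul_nonneg hμ0 hr0
  have hcos_neg := Real.neg_one_le_cos t
  have hle : |lazyWalkCharFun μ t| ≤ 1 - 2 * μ * (1 - μ) * r := by
    rw [lazyWalkCharFun, abs_le]
    constructor <;> nlinarith [mul_le_one₀ hμ1 hr0 hr1]
  calc |lazyWalkCharFun μ t| ≤ 1 - 2 * μ * (1 - μ) * r := hle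
    _ ≤ Real.exp (-(2 * μ * (1 - μ) * r)) := Real.one_sub_le_exp_neg _
    _ = _ := by rw [hr]; ring_nf

/-- The Poisson kernel of the unit disc at the real point `z`, as a function of the angle on the
unit circle. -/
noncomputable def realPoissonKernel (z t : ℝ) : ℝ :=
  (1 - z ^ 2) / ((1 - z) ^ 2 + 2 * z * (1 - Real.cos t))

section PoissonKernel

variable {z : ℝ}

theorem poissonKernel_circleMap (z t : ℝ) :
    poissonKernel 0 z (circleMap 0 1 t) = realPoissonKernel z t := by
  have hnorm : ‖circleMap 0 1 t - (z : ℂ)‖ ^ 2 = (1 - z) ^ 2 + 2 * z * (1 - Real.cos t) := by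
    rw [← Complex.normSq_eq_norm_sq, Complex.normSq_apply]
    simp only [circleMap_zero, Complex.ofReal_one, one_mul, Complex.sub_re, Complex.sub_im,
      Complex.exp_ofReal_mul_I_re, Complex.exp_ofReal_mul_I_im, Complex.ofReal_re,
      Complex.ofReal_im, sub_zero]
    linear_combination Real.sin_sq_add_cos_sq t
  rw [poissonKernel_def, sub_zero, sub_zero, hnorm, realPoissonKernel]
  simp

theorem realPoissonKernel_zero (hz : z ≠ 1) : realPoissonKernel z 0 = (1 + z) / (1 - z) := by
  have : 1 - z ≠ 0 := sub_ne_zero.mpr hz.symm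
  rw [realPoissonKernel, Real.cos_zero]
  field_simp
  ring

theorem realPoissonKernel_denom_pos (hz0 : 0 ≤ z) (hz1 : z < 1) (t : ℝ) :
    0 < (1 - z) ^ 2 + 2 * z * (1 - Real.cos t) := by
  have : 0 < (1 - z) ^ 2 := pow_pos (sub_pos.mpr hz1) 2
  have hcos : 0 ≤ 1 - Real.cos t := sub_nonneg.mpr (Real.cos_le_one t)
  positivity

theorem continuous_realPoissonKernel (hz0 : 0 ≤ z) (hz1 : z < 1) :
    Continuous (realPoissonKernel z) :=
  Continuous.div (by fun_prop) (by fun_prop) fun t => (realPoissonKernel_denom_pos hz0 hz1 t).ne'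

theorem realPoissonKernel_sub_isLittleO (hz0 : 0 ≤ z) (hz1 : z < 1) :
    (fun t => realPoissonKernel z t - realPoissonKernel z 0 - -(z * (1 + z) / (1 - z) ^ 3) * t ^ 2)
      =o[𝓝 0] fun t => t ^ 2 := by
  have hK : Tendsto (realPoissonKernel z) (𝓝 0) (𝓝 (realPoissonKernel z 0)) :=
    (continuous_realPoissonKernel hz0 hz1).tendsto 0
  have hcos : (fun t => (Real.cos t - (1 - t ^ 2 / 2)) * realPoissonKernel z t)
      =o[𝓝 0] fun t => t ^ 2 := by
    simpa using cos_sub_taylor_two_isLittleO.mul_isBigO (hK.isBigO_one ℝ)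
  have hdiff : (fun t => t ^ 2 * (realPoissonKernel z t - realPoissonKernel z 0))
      =o[𝓝 0] fun t : ℝ => t ^ 2 := by
    simpa using (isBigO_refl (fun t : ℝ => t ^ 2) (𝓝 0)).mul_isLittleO
      ((isLittleO_one_iff ℝ).mpr (tendsto_sub_nhds_zero_iff.mpr hK))
  refine ((hcos.const_mul_left (2 * z / (1 - z) ^ 2)).sub
    (hdiff.const_mul_left (z / (1 - z) ^ 2))).congr_left fun t => ?_
  have hz : 1 - z ≠ 0 := (sub_pos.mpr hz1).ne'
  have hdenom := (realPoissonKernel_denom_pos hz0 hz1 t).ne'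
  rw [realPoissonKernel_zero hz1.ne, realPoissonKernel]
  field_simp
  ring

theorem integral_cos_mul_realPoissonKernel (hz0 : 0 ≤ z) (hz1 : z < 1) (k : ℕ) :
    ∫ t in -π..π, Real.cos (k * t) * realPoissonKernel z t = 2 * π * z ^ k := by
  have hball : (z : ℂ) ∈ Metric.ball (0 : ℂ) 1 := by simpa [abs_of_nonneg hz0] using hz1
  have hpoisson := (differentiable_pow (𝕜 := ℂ) k).diffContOnCl.circleAverage_poissonKernel_smul
    hball
  rw [Real.circleAverage_def, inv_smul_eq_iff₀ Real.two_pi_pos.ne'] at hpoisson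
  have hcont : Continuous fun t => (poissonKernel 0 z • fun w : ℂ => w ^ k) (circleMap 0 1 t) := by
    simp only [Pi.smul_apply', poissonKernel_circleMap]
    have := continuous_realPoissonKernel hz0 hz1
    fun_prop
  have hre (t : ℝ) : Complex.reCLM ((poissonKernel 0 z • fun w : ℂ => w ^ k) (circleMap 0 1 t))
      = Real.cos (k * t) * realPoissonKernel z t := by
    rw [Pi.smul_apply', poissonKernel_circleMap, circleMap_zero_pow, one_pow, circleMap_zero,
      Complex.ofReal_one, one_mul, Complex.reCLM_apply, Complex.real_smul, Complex.re_ofReal_mul,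
      Complex.exp_ofReal_mul_I_re, mul_comm]
  have hperiodic :
      Function.Periodic (fun t => Real.cos (k * t) * realPoissonKernel z t) (2 * π) := fun t => by
    simp only [realPoissonKernel, Real.cos_add_two_pi, mul_add, Real.cos_add_nat_mul_two_pi]
  calc ∫ t in -π..π, Real.cos (k * t) * realPoissonKernel z t
      = ∫ t in 0..2 * π, Real.cos (k * t) * realPoissonKernel z t := by
        have := hperiodic.intervalIntegral_add_eq (-π) 0
        rwa [zero_add, show -π + 2 * π = π by ring] at this
    _ = Complex.reCLM (∫ t in 0..2 * π,
          (poissonKernel 0 z • fun w : ℂ => w ^ k) (circleMap 0 1 t)) := by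
        rw [← Complex.reCLM.intervalIntegral_comp_comm (hcont.intervalIntegrable _ _)]
        simp only [hre]
    _ = 2 * π * z ^ k := by
        rw [hpoisson]
        simp [← Complex.ofReal_pow]

end PoissonKernel

theorem hasFirstOrderExpansion_integral_lazyWalkCharFun_pow_mul_realPoissonKernel {μ z : ℝ}
    (hμ0 : 0 < μ) (hμ1 : μ < 1) (hz0 : 0 ≤ z) (hz1 : z < 1) :
    HasFirstOrderExpansion
      (fun n => √(2 * π * μ * n) *
        ((2 * π)⁻¹ * ∫ t in -π..π, lazyWalkCharFun μ t ^ n * realPoissonKernel z t))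
      ((1 + z) / (1 - z))
      ((1 + z) / (1 - z) * ((1 - 3 * μ) / (8 * μ)) - z * (1 + z) / ((1 - z) ^ 3 * μ)) := by
  have hlaplace := hasFirstOrderExpansion_sqrt_mul_integral_pow_mul (R := π) Real.pi_pos hμ0
    (c := 2 * μ * (1 - μ) / π ^ 2) (by have := sub_pos.mpr hμ1; positivity)
    (continuous_lazyWalkCharFun μ) (continuous_realPoissonKernel hz0 hz1)
    (lazyWalkCharFun_sub_gaussian_isLittleO μ) (realPoissonKernel_sub_isLittleO hz0 hz1)
    fun t ht => abs_lazyWalkCharFun_le hμ0.le hμ1.le ht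
  rw [realPoissonKernel_zero hz1.ne] at hlaplace
  have hnormalize : √(2 * π * μ) * (2 * π)⁻¹ * √(2 * π / μ) = 1 := by
    rw [mul_right_comm, ← Real.sqrt_mul (by positivity),
      show 2 * π * μ * (2 * π / μ) = (2 * π) ^ 2 by field_simp, Real.sqrt_sq (by positivity)]
    field_simp
  have hscaled := hlaplace.const_mul (√(2 * π * μ) * (2 * π)⁻¹)
  rw [← mul_assoc, ← mul_assoc, hnormalize, one_mul, one_mul] at hscaled
  convert hscaled.congr' (.of_forall fun n => ?_) using 1
  · field_simp
    ring
  · rw [Real.sqrt_mul (x := 2 * π * μ) (by positivity) (n : ℝ)]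
    ring

/-! ### Independent samples and tilting -/

/-- The expectation of `F` over `n` independent samples from the mass function `P`; negative or
unnormalised weights `P` are allowed, so that tilted measures need no normalisation. -/
noncomputable def iidExp {Y : Type*} [Fintype Y] (P : Y → ℝ) (n : ℕ) (F : (Fin n → Y) → ℝ) : ℝ :=
  ∑ ys : Fin n → Y, (∏ k, P (ys k)) * F ys

/-- The Heaviside function with value `1 / 2` at the origin. -/
noncomputable def halfStep (k : ℤ) : ℝ := (1 + k.sign) / 2

section IidExp

variable {Y : Type*} [Fintype Y] (P : Y → ℝ) (n : ℕ)

theorem iidExp_add (F G : (Fin n → Y) → ℝ) :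
    iidExp P n (fun ys => F ys + G ys) = iidExp P n F + iidExp P n G := by
  simp only [iidExp, mul_add, Finset.sum_add_distrib]

theorem iidExp_const_mul (c : ℝ) (F : (Fin n → Y) → ℝ) :
    iidExp P n (fun ys => c * F ys) = c * iidExp P n F := by
  simp only [iidExp, Finset.mul_sum, mul_left_comm]

theorem iidExp_prod (g : Y → ℝ) :
    iidExp P n (fun ys => ∏ k, g (ys k)) = (∑ y, P y * g y) ^ n := by
  simp only [iidExp, Fintype.sum_pow, Finset.prod_mul_distrib]

variable {P}

theorem iidExp_comp (σ : Y ≃ Y) (hσ : ∀ y, P (σ y) = P y) (F : (Fin n → Y) → ℝ) :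
    iidExp P n (fun ys => F fun k => σ (ys k)) = iidExp P n F := by
  refine Fintype.sum_equiv (Equiv.piCongrRight fun _ => σ) _ _ fun ys => ?_
  simp only [Equiv.piCongrRight_apply, Pi.map_apply, hσ]
  rfl

theorem zpow_finset_sum {ι : Type*} (s : Finset ι) {w : ℝ} (hw : w ≠ 0) (d : ι → ℤ) :
    w ^ ∑ k ∈ s, d k = ∏ k ∈ s, w ^ d k := by
  induction s using Finset.induction_on with
  | empty => simp
  | insert i s hi ih => rw [Finset.sum_insert hi, Finset.prod_insert hi, zpow_add₀ hw, ih]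

variable {n}

theorem abs_iidExp_sub_iidExp_le (hP : ∀ y, 0 ≤ P y) {F G : (Fin n → Y) → ℝ} {d : Y → ℤ} {w : ℝ}
    (hw : 1 ≤ w) (hFG : ∀ ys, |F ys - G ys| ≤ if 0 ≤ ∑ k, d (ys k) then 1 else 0) :
    |iidExp P n F - iidExp P n G| ≤ (∑ y, P y * w ^ d y) ^ n := by
  have hw0 : 0 < w := zero_lt_one.trans_le hw
  have hzpow (ys : Fin n → Y) : |F ys - G ys| ≤ ∏ k, w ^ d (ys k) := by
    rw [← zpow_finset_sum _ hw0.ne']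
    refine (hFG ys).trans ?_
    split_ifs with hsum
    · exact one_le_zpow₀ hw hsum
    · positivity
  have hweight (ys : Fin n → Y) : 0 ≤ ∏ k, P (ys k) := Finset.prod_nonneg fun k _ => hP (ys k)
  calc |iidExp P n F - iidExp P n G|
      = |∑ ys : Fin n → Y, (∏ k, P (ys k)) * (F ys - G ys)| := by
        simp only [iidExp, mul_sub, Finset.sum_sub_distrib]
    _ ≤ ∑ ys : Fin n → Y, |(∏ k, P (ys k)) * (F ys - G ys)| := Finset.abs_sum_le_sum_abs _ _
    _ ≤ iidExp P n fun ys => ∏ k, w ^ d (ys k) := by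
        refine Finset.sum_le_sum fun ys _ => ?_
        rw [abs_mul, abs_of_nonneg (hweight ys)]
        exact mul_le_mul_of_nonneg_left (hzpow ys) (hweight ys)
    _ = (∑ y, P y * w ^ d y) ^ n := iidExp_prod P n fun y => w ^ d y

theorem iidExp_cos {d : Y → ℤ} {t : ℝ} (hsin : ∑ y, P y * Real.sin (d y * t) = 0) :
    iidExp P n (fun ys => Real.cos ((∑ k, d (ys k) : ℤ) * t))
      = (∑ y, P y * Real.cos (d y * t)) ^ n := by
  have hreal : ∑ y, (P y : ℂ) * Complex.exp ((d y * t : ℝ) * Complex.I)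
      = (∑ y, P y * Real.cos (d y * t) : ℝ) := by
    apply Complex.ext
    · simp only [Complex.re_sum, Complex.re_ofReal_mul, Complex.exp_ofReal_mul_I_re,
        Complex.ofReal_re]
    · simp only [Complex.im_sum, Complex.im_ofReal_mul, Complex.exp_ofReal_mul_I_im,
        Complex.ofReal_im, hsin]
  have hpow := congrArg Complex.re
    (Fintype.sum_pow (fun y => (P y : ℂ) * Complex.exp ((d y * t : ℝ) * Complex.I)) n)
  rw [hreal, ← Complex.ofReal_pow, Complex.ofReal_re, Complex.re_sum] at hpow
  rw [hpow, iidExp]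
  refine Finset.sum_congr rfl fun ys _ => ?_
  rw [Finset.prod_mul_distrib, ← Complex.exp_sum, ← Complex.ofReal_prod, ← Finset.sum_mul,
    ← Complex.ofReal_sum, Complex.re_ofReal_mul, Complex.exp_ofReal_mul_I_re, ← Finset.sum_mul,
    Int.cast_sum]

theorem iidExp_pow_natAbs_eq_integral {d : Y → ℤ} (σ : Y ≃ Y) (hPσ : ∀ y, P (σ y) = P y)
    (hdσ : ∀ y, d (σ y) = -d y) {z : ℝ} (hz0 : 0 ≤ z) (hz1 : z < 1) :
    iidExp P n (fun ys => z ^ (∑ k, d (ys k)).natAbs)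
      = (2 * π)⁻¹ * ∫ t in -π..π, (∑ y, P y * Real.cos (d y * t)) ^ n * realPoissonKernel z t := by
  have hsin (t : ℝ) : ∑ y, P y * Real.sin (d y * t) = 0 := by
    have hodd : ∑ y, P y * Real.sin (d y * t) = -∑ y, P y * Real.sin (d y * t) := by
      rw [← Finset.sum_neg_distrib, ← σ.sum_comp]
      simp only [hPσ, hdσ, Int.cast_neg, neg_mul, Real.sin_neg, mul_neg]
    linarith
  have hfourier (m : ℤ) :
      ∫ t in -π..π, Real.cos (m * t) * realPoissonKernel z t = 2 * π * z ^ m.natAbs := by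
    have hcos (t : ℝ) : Real.cos (m * t) = Real.cos (m.natAbs * t) := by
      rw [Nat.cast_natAbs, Int.cast_abs]
      rcases abs_choice (m : ℝ) with h | h <;> rw [h]
      rw [neg_mul, Real.cos_neg]
    simp only [hcos, integral_cos_mul_realPoissonKernel hz0 hz1]
  have hcont := continuous_realPoissonKernel hz0 hz1
  simp only [← iidExp_cos (hsin _), iidExp, Finset.sum_mul, mul_assoc]
  rw [intervalIntegral.integral_finsetSum
    fun ys _ => Continuous.intervalIntegrable (by fun_prop) _ _, Finset.mul_sum]
  refine Finset.sum_congr rfl fun ys _ => ?_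
  rw [intervalIntegral.integral_const_mul, hfourier]
  field_simp

theorem zpow_mul_halfStep_add {z : ℝ} (k : ℤ) :
    z ^ k * halfStep k + z ^ (-k) * halfStep (-k) = z ^ k.natAbs := by
  rcases lt_trichotomy k 0 with hk | rfl | hk
  · have hnat : z ^ (-k) = z ^ k.natAbs := by
      rw [← zpow_natCast, Int.ofNat_natAbs_of_nonpos hk.le]
    simp [halfStep, Int.sign_eq_neg_one_of_neg hk, hnat]
  · norm_num [halfStep]
  · have hnat : z ^ k = z ^ k.natAbs := by
      rw [← zpow_natCast, Int.natAbs_of_nonneg hk.le]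
    simp [halfStep, Int.sign_eq_one_of_pos hk, hnat]

-- Under the weights tilted by `z ^ (-d)` the walk is symmetric, hence equal in law to its negative.
theorem two_mul_iidExp_halfStep {d : Y → ℤ} (σ : Y ≃ Y) (hdσ : ∀ y, d (σ y) = -d y) {z : ℝ}
    (hz : z ≠ 0) (hPσ : ∀ y, P (σ y) * z ^ d y = P y * z ^ (-d y)) :
    2 * iidExp P n (fun ys => halfStep (∑ k, d (ys k)))
      = iidExp (fun y => P y * z ^ (-d y)) n fun ys => z ^ (∑ k, d (ys k)).natAbs := by
  set w : Y → ℝ := fun y => P y * z ^ (-d y) with hw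
  have htilt : iidExp P n (fun ys => halfStep (∑ k, d (ys k)))
      = iidExp w n fun ys => z ^ (∑ k, d (ys k)) * halfStep (∑ k, d (ys k)) := by
    refine Finset.sum_congr rfl fun ys _ => ?_
    dsimp only
    rw [zpow_finset_sum _ hz, ← mul_assoc, ← Finset.prod_mul_distrib]
    simp only [hw, mul_assoc, ← zpow_add₀ hz, neg_add_cancel, zpow_zero, mul_one]
  have hreflect := iidExp_comp (P := w) n σ (fun y => by simp only [hw, hdσ, neg_neg, hPσ])
    fun ys => z ^ (∑ k, d (ys k)) * halfStep (∑ k, d (ys k))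
  simp only [hdσ, Finset.sum_neg_distrib] at hreflect
  calc 2 * iidExp P n (fun ys => halfStep (∑ k, d (ys k)))
      = iidExp w n (fun ys => z ^ (∑ k, d (ys k)) * halfStep (∑ k, d (ys k)))
        + iidExp w n (fun ys => z ^ (-∑ k, d (ys k)) * halfStep (-∑ k, d (ys k))) := by
        rw [hreflect, htilt, two_mul]
    _ = iidExp w n fun ys => z ^ (∑ k, d (ys k)).natAbs := by
        simp only [← iidExp_add, zpow_mul_halfStep_add]

end IidExp

/-! ### The noisy three-node chain -/

/-- Whether the coordinates `i` and `j` agree, as an integer. -/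
def agreement {p : ℕ} (i j : Fin p) (y : Fin p → Bool) : ℤ := if y i = y j then 1 else 0

theorem agreement_comm {p : ℕ} (i j : Fin p) (y : Fin p → Bool) :
    agreement i j y = agreement j i y := by
  simp only [agreement, eq_comm]

theorem Ahat_eq_sum_agreement {p n : ℕ} (ys : Fin n → Fin p → Bool) (i j : Fin p) :
    Ahat ys i j = (∑ k, agreement i j (ys k) : ℤ) / n := by
  simp [Ahat, agreement]

/-- The agreement across the non-edge `{0, 2}` of the chain minus the agreement across `{i, j}`.
Summed over the samples, it is positive exactly when the estimator prefers `{0, 2}` to `{i, j}`. -/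
def spuriousGap (i j : Fin 3) (y : Fin 3 → Bool) : ℤ := agreement 0 2 y - agreement i j y

/-- The probability, given the samples, that the maximum-weight spanning tree estimator with uniform
tie-breaking errs, in terms of the summed gaps `a` and `b` for the edges `{0, 1}` and `{1, 2}`. -/
noncomputable def mwstLoss (a b : ℤ) : ℝ :=
  (if 0 < a ∨ 0 < b then 1 else 0) + 1 / 2 * (if a = 0 ∧ b < 0 then 1 else 0)
    + 1 / 2 * (if b = 0 ∧ a < 0 then 1 else 0) + 2 / 3 * (if a = 0 ∧ b = 0 then 1 else 0)

theorem abs_mwstLoss_sub_halfStep_add_le (a b : ℤ) :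
    |mwstLoss a b - (halfStep a + halfStep b)| ≤ if 0 ≤ a + b then 1 else 0 := by
  rcases lt_trichotomy a 0 with ha | rfl | ha <;> rcases lt_trichotomy b 0 with hb | rfl | hb <;>
    rw [mwstLoss] <;> split_ifs <;>
    first
      | omega
      | norm_num [halfStep, Int.sign_eq_neg_one_of_neg, Int.sign_eq_one_of_pos, *]

theorem mwstLoss_sub (a b c : ℤ) :
    mwstLoss (c - a) (c - b) =
      (if a < c ∨ b < c then 1 else 0) + 1 / 2 * (if a < b ∧ a = c then 1 else 0)
        + 1 / 2 * (if b < a ∧ b = c then 1 else 0) + 2 / 3 * (if a = b ∧ b = c then 1 else 0) := by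
  simp only [mwstLoss, sub_pos,
    show c - a = 0 ∧ c - b < 0 ↔ a < b ∧ a = c by omega,
    show c - b = 0 ∧ c - a < 0 ↔ b < a ∧ b = c by omega,
    show c - a = 0 ∧ c - b = 0 ↔ a = b ∧ b = c by omega]

theorem iidProb_eq_iidExp {p : ℕ} (P : (Fin p → Bool) → ℝ) (n : ℕ)
    (A : Set (Fin n → Fin p → Bool)) :
    iidProb P n A = iidExp P n fun ys => if ys ∈ A then 1 else 0 := by
  simp only [iidProb, iidExp, mul_ite, mul_one, mul_zero]

/-- The law of one noisy sample of the three-node chain. -/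
noncomputable def noisyChain (θ q : ℝ) : (Fin 3 → Bool) → ℝ := noisy q (isingP θ chainA)

theorem ErrProbQ_eq_iidExp (θ q : ℝ) {n : ℕ} (hn : n ≠ 0) :
    ErrProbQ θ q n = iidExp (noisyChain θ q) n fun ys =>
      mwstLoss (∑ k, spuriousGap 0 1 (ys k)) (∑ k, spuriousGap 1 2 (ys k)) := by
  have hn0 : (0 : ℝ) < n := by positivity
  have hlt (ys : Fin n → Fin 3 → Bool) (i j k l : Fin 3) : Ahat ys i j < Ahat ys k l ↔
      ∑ m, agreement i j (ys m) < ∑ m, agreement k l (ys m) := by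
    rw [Ahat_eq_sum_agreement, Ahat_eq_sum_agreement, div_lt_div_iff_of_pos_right hn0, Int.cast_lt]
  have heq (ys : Fin n → Fin 3 → Bool) (i j k l : Fin 3) : Ahat ys i j = Ahat ys k l ↔
      ∑ m, agreement i j (ys m) = ∑ m, agreement k l (ys m) := by
    rw [Ahat_eq_sum_agreement, Ahat_eq_sum_agreement, div_left_inj' hn0.ne', Int.cast_inj]
  simp only [ErrProbQ, iidProb_eq_iidExp, ← iidExp_const_mul, ← iidExp_add, hlt, heq,
    Set.mem_ofPred_eq, noisyChain, spuriousGap, Finset.sum_sub_distrib, mwstLoss_sub]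
  congr!

theorem pow_hamming_mul_pow {p : ℕ} (q : ℝ) (x y : Fin p → Bool) :
    q ^ hamming x y * (1 - q) ^ (p - hamming x y) = ∏ i, if x i = y i then 1 - q else q := by
  have hcard := Finset.card_filter_add_card_filter_not (s := Finset.univ) fun i => x i = y i
  rw [Finset.prod_ite, Finset.prod_const, Finset.prod_const, mul_comm, hamming]
  rw [Finset.card_univ, Fintype.card_fin] at hcard
  congr 2
  simp only [ne_eq]
  omega

theorem sum_fin_three_arrow {α M : Type*} [Fintype α] [AddCommMonoid M] (g : (Fin 3 → α) → M) :
    ∑ y, g y = ∑ a, ∑ b, ∑ c, g ![a, b, c] := by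
  let e : α × α × α ≃ (Fin 3 → α) :=
    { toFun := fun x => ![x.1, x.2.1, x.2.2]
      invFun := fun y => (y 0, y 1, y 2)
      left_inv := fun _ => rfl
      right_inv := fun y => by ext i; fin_cases i <;> rfl }
  rw [← e.sum_comp]
  simp only [Fintype.sum_prod_type]
  rfl

theorem isingP_chainA (θ : ℝ) (x : Fin 3 → Bool) :
    isingP θ chainA x
      = 1 / 2 * ((if x 0 = x 1 then 1 - θ else θ) * (if x 1 = x 2 then 1 - θ else θ)) := by
  have hedges : chainA.edgeFinset = {s(0, 1), s(1, 2)} := by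
    ext e
    rw [SimpleGraph.mem_edgeFinset, chainA, SimpleGraph.edgeSet_fromEdgeSet]
    simp only [Set.mem_sdiff, Set.mem_insert_iff, Set.mem_singleton_iff, Finset.mem_insert,
      Finset.mem_singleton, and_iff_left_iff_imp]
    rintro (rfl | rfl) <;> simp
  rw [isingP, hedges, Finset.prod_insert (by decide), Finset.prod_singleton]
  simp [pairWeight]

/-- The probability under `noisyChain` of each of the two constant samples, alongside `beta1` (the
four samples with one disagreeing edge) and `beta2` (the two with both edges disagreeing). -/
noncomputable def beta0 (θ q : ℝ) : ℝ :=
  ((1 - q) ^ 3 + q ^ 3) * ((1 - θ) ^ 2 / 2) + q * (1 - q) * ((1 - (1 - θ) ^ 2) / 2)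

theorem noisyChain_apply (θ q : ℝ) (y : Fin 3 → Bool) :
    noisyChain θ q y =
      if y 0 = y 1 then (if y 1 = y 2 then beta0 θ q else beta1 θ q)
      else (if y 0 = y 2 then beta2 θ q else beta1 θ q) := by
  simp only [noisyChain, noisy, pow_hamming_mul_pow, isingP_chainA, sum_fin_three_arrow,
    Fin.prod_univ_three, Fintype.sum_bool, beta0, beta1, beta2]
  generalize y 0 = a
  generalize y 1 = b
  generalize y 2 = c
  cases a <;> cases b <;> cases c <;>
    simp only [Matrix.cons_val_zero, Matrix.cons_val_one, Matrix.cons_val, Bool.true_eq_false,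
      Bool.false_eq_true, if_true, if_false] <;>
    ring

theorem noisyChain_nonneg {θ q : ℝ} (hβ0 : 0 ≤ beta0 θ q) (hβ1 : 0 ≤ beta1 θ q)
    (hβ2 : 0 ≤ beta2 θ q) (y : Fin 3 → Bool) : 0 ≤ noisyChain θ q y := by
  rw [noisyChain_apply]
  split_ifs <;> assumption

theorem sum_noisyChain_mul (θ q : ℝ) (g : ℤ → ℤ → ℝ) :
    ∑ y, noisyChain θ q y * g (spuriousGap 0 1 y) (spuriousGap 1 2 y)
      = 2 * (beta0 θ q * g 0 0) + 2 * (beta1 θ q * g (-1) 0) + 2 * (beta1 θ q * g 0 (-1))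
        + 2 * (beta2 θ q * g 1 1) := by
  simp only [sum_fin_three_arrow, Fintype.sum_bool, noisyChain_apply, spuriousGap, agreement,
    Matrix.cons_val_zero, Matrix.cons_val_one, Matrix.cons_val, Bool.true_eq_false,
    Bool.false_eq_true, if_true, if_false, sub_self, zero_sub, sub_zero]
  ring

theorem two_mul_beta0_add (θ q : ℝ) : 2 * beta0 θ q + 4 * beta1 θ q + 2 * beta2 θ q = 1 := by
  simp only [beta0, beta1, beta2]
  ring

theorem channel_mixture_pos {q s : ℝ} (hq0 : 0 ≤ q) (hq1 : q ≤ 1) (hs0 : 0 < s) (hs1 : s ≤ 1) :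
    0 < ((1 - q) ^ 3 + q ^ 3) * (s / 2) + q * (1 - q) * ((1 - s) / 2) := by
  have : 0 ≤ 1 - q := sub_nonneg.mpr hq1
  have : 0 ≤ 1 - s := sub_nonneg.mpr hs1
  have hcubes : 0 < (1 - q) ^ 3 + q ^ 3 := by
    linear_combination 3 * sq_nonneg (q - 1 / 2) + (1 / 4 : ℝ) * one_pos (α := ℝ)
  positivity

theorem beta0_pos {θ q : ℝ} (hθ0 : 0 ≤ θ) (hθ1 : θ < 1) (hq0 : 0 ≤ q) (hq1 : q ≤ 1) :
    0 < beta0 θ q :=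
  channel_mixture_pos hq0 hq1 (pow_pos (sub_pos.mpr hθ1) 2)
    (pow_le_one₀ (sub_nonneg.mpr hθ1.le) (sub_le_self 1 hθ0))

theorem beta2_pos {θ q : ℝ} (hθ0 : 0 < θ) (hθ1 : θ ≤ 1) (hq0 : 0 ≤ q) (hq1 : q ≤ 1) :
    0 < beta2 θ q :=
  channel_mixture_pos hq0 hq1 (pow_pos hθ0 2) (pow_le_one₀ hθ0.le hθ1)

theorem beta2_lt_beta1 {θ q : ℝ} (hθ0 : 0 < θ) (hθ1 : θ < 1 / 2) (hq : q ≠ 1 / 2) :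
    beta2 θ q < beta1 θ q := by
  have hdiff : beta1 θ q - beta2 θ q = (1 - 2 * q) ^ 2 * (θ * (1 - 2 * θ) / 2) := by
    simp only [beta1, beta2]
    ring
  have hθ : 0 < 1 - 2 * θ := by linarith
  have hq' : 1 - 2 * q ≠ 0 := fun h => hq (by linarith)
  rw [← sub_pos, hdiff]
  positivity

/-- The relabelling of the coordinates of a sample by a permutation. -/
def relabel {p : ℕ} (σ : Equiv.Perm (Fin p)) : (Fin p → Bool) ≃ (Fin p → Bool) :=
  σ.arrowCongr (Equiv.refl Bool)

theorem relabel_apply {p : ℕ} (σ : Equiv.Perm (Fin p)) (y : Fin p → Bool) (i : Fin p) :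
    relabel σ y i = y (σ.symm i) := rfl

theorem agreement_relabel {p : ℕ} (σ : Equiv.Perm (Fin p)) (i j : Fin p) (y : Fin p → Bool) :
    agreement i j (relabel σ y) = agreement (σ.symm i) (σ.symm j) y := rfl

theorem spuriousGap_relabel_swap_one_two (y : Fin 3 → Bool) :
    spuriousGap 0 1 (relabel (Equiv.swap 1 2) y) = -spuriousGap 0 1 y := by
  simp only [spuriousGap, agreement_relabel, Equiv.symm_swap, neg_sub]
  rfl

theorem spuriousGap_relabel_swap_zero_two (y : Fin 3 → Bool) :
    spuriousGap 0 1 (relabel (Equiv.swap 0 2) y) = spuriousGap 1 2 y := by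
  simp only [spuriousGap, agreement_relabel, Equiv.symm_swap]
  rw [agreement_comm, agreement_comm (Equiv.swap 0 2 0)]
  rfl

theorem noisyChain_relabel_swap_zero_two (θ q : ℝ) (y : Fin 3 → Bool) :
    noisyChain θ q (relabel (Equiv.swap 0 2) y) = noisyChain θ q y := by
  have h1 : Equiv.swap (0 : Fin 3) 2 1 = 1 := rfl
  simp only [noisyChain_apply, relabel_apply, Equiv.symm_swap, Equiv.swap_apply_left,
    Equiv.swap_apply_right, h1]
  cases y 0 <;> cases y 1 <;> cases y 2 <;> rfl

section Tilting

variable {θ q : ℝ}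

theorem zq_pos (hβ1 : 0 < beta1 θ q) (hβ2 : 0 < beta2 θ q) : 0 < zq θ q :=
  Real.sqrt_pos.mpr (div_pos hβ2 hβ1)

theorem zq_lt_one (hβ1 : 0 < beta1 θ q) (hβ21 : beta2 θ q < beta1 θ q) : zq θ q < 1 := by
  rw [zq, Real.sqrt_lt' one_pos, one_pow, div_lt_one hβ1]
  exact hβ21

theorem beta2_eq_zq_sq_mul (hβ1 : 0 < beta1 θ q) (hβ2 : 0 ≤ beta2 θ q) :
    beta2 θ q = zq θ q ^ 2 * beta1 θ q := by
  rw [zq, Real.sq_sqrt (div_nonneg hβ2 hβ1.le), div_mul_cancel₀ _ hβ1.ne']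

theorem sqrt_beta1_mul_beta2 (hβ1 : 0 < beta1 θ q) (hβ2 : 0 < beta2 θ q) :
    √(beta1 θ q * beta2 θ q) = zq θ q * beta1 θ q := by
  have hz := zq_pos hβ1 hβ2
  rw [beta2_eq_zq_sq_mul hβ1 hβ2.le,
    show beta1 θ q * (zq θ q ^ 2 * beta1 θ q) = (zq θ q * beta1 θ q) ^ 2 by ring,
    Real.sqrt_sq (by positivity)]

theorem noisyChain_relabel_swap_one_two_mul_zpow (hβ1 : 0 < beta1 θ q) (hβ2 : 0 < beta2 θ q)
    (y : Fin 3 → Bool) :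
    noisyChain θ q (relabel (Equiv.swap 1 2) y) * zq θ q ^ spuriousGap 0 1 y
      = noisyChain θ q y * zq θ q ^ (-spuriousGap 0 1 y) := by
  have hz := (zq_pos hβ1 hβ2).ne'
  have h0 : Equiv.swap (1 : Fin 3) 2 0 = 0 := rfl
  simp only [noisyChain_apply, relabel_apply, Equiv.symm_swap, Equiv.swap_apply_left,
    Equiv.swap_apply_right, h0, spuriousGap, agreement]
  cases y 0 <;> cases y 1 <;> cases y 2 <;>
    simp only [beta2_eq_zq_sq_mul hβ1 hβ2.le, Bool.true_eq_false, Bool.false_eq_true, if_true,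
      if_false, sub_self, zero_sub, sub_zero, neg_neg, neg_zero, zpow_one, zpow_neg_one] <;>
    field_simp

/-- The total mass of `noisyChain` tilted by `z ^ (-spuriousGap 0 1)`, which equals `exp (-K)`. -/
noncomputable def tiltedMass (θ q : ℝ) : ℝ :=
  2 * beta0 θ q + 2 * beta1 θ q + 4 * (zq θ q * beta1 θ q)

theorem tiltedMass_pos (hβ0 : 0 < beta0 θ q) (hβ1 : 0 < beta1 θ q) : 0 < tiltedMass θ q := by
  have hz : 0 ≤ zq θ q := Real.sqrt_nonneg _
  unfold tiltedMass
  positivity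

theorem Kq_eq_neg_log_tiltedMass (hβ1 : 0 < beta1 θ q) (hβ2 : 0 < beta2 θ q) :
    Kq θ q = -Real.log (tiltedMass θ q) := by
  rw [Kq, sqrt_beta1_mul_beta2 hβ1 hβ2, tiltedMass]
  congr 2
  linear_combination -two_mul_beta0_add θ q

theorem tiltedMass_mul_mu2 (hβ0 : 0 < beta0 θ q) (hβ1 : 0 < beta1 θ q) (hβ2 : 0 < beta2 θ q) :
    tiltedMass θ q * mu2 θ q = 4 * (zq θ q * beta1 θ q) := by
  have hmass := tiltedMass_pos hβ0 hβ1
  rw [mu2, sqrt_beta1_mul_beta2 hβ1 hβ2, Kq_eq_neg_log_tiltedMass hβ1 hβ2, Real.exp_neg,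
    Real.exp_log hmass]
  field_simp

theorem mu2_pos (hβ1 : 0 < beta1 θ q) (hβ2 : 0 < beta2 θ q) : 0 < mu2 θ q := by
  unfold mu2
  positivity

theorem mu2_lt_one (hβ0 : 0 < beta0 θ q) (hβ1 : 0 < beta1 θ q) (hβ2 : 0 < beta2 θ q) :
    mu2 θ q < 1 := by
  have hmass := tiltedMass_pos hβ0 hβ1
  have hlt : tiltedMass θ q * mu2 θ q < tiltedMass θ q * 1 := by
    rw [tiltedMass_mul_mu2 hβ0 hβ1 hβ2, tiltedMass]
    linarith
  exact lt_of_mul_lt_mul_left hlt hmass.le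

theorem sum_tilted_noisyChain_mul_cos (hβ0 : 0 < beta0 θ q) (hβ1 : 0 < beta1 θ q)
    (hβ2 : 0 < beta2 θ q) (t : ℝ) :
    ∑ y, noisyChain θ q y * zq θ q ^ (-spuriousGap 0 1 y) * Real.cos (spuriousGap 0 1 y * t)
      = tiltedMass θ q * lazyWalkCharFun (mu2 θ q) t := by
  have hz := (zq_pos hβ1 hβ2).ne'
  have hmass : tiltedMass θ q = 2 * beta0 θ q + 2 * beta1 θ q + 4 * (zq θ q * beta1 θ q) := rfl
  have hratio : beta2 θ q / zq θ q = zq θ q * beta1 θ q := by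
    rw [beta2_eq_zq_sq_mul hβ1 hβ2.le]
    field_simp
  calc ∑ y, noisyChain θ q y * zq θ q ^ (-spuriousGap 0 1 y) * Real.cos (spuriousGap 0 1 y * t)
      = 2 * beta0 θ q + 2 * beta1 θ q + 2 * (beta1 θ q * zq θ q * Real.cos t)
        + 2 * (beta2 θ q / zq θ q * Real.cos t) := by
        simp only [mul_assoc]
        rw [sum_noisyChain_mul θ q fun a _ => zq θ q ^ (-a) * Real.cos (a * t)]
        simp only [neg_zero, neg_neg, zpow_zero, zpow_one, zpow_neg_one, Int.cast_zero,
          Int.cast_one, Int.cast_neg, zero_mul, neg_mul, one_mul, Real.cos_zero, Real.cos_neg]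
        ring
    _ = tiltedMass θ q * lazyWalkCharFun (mu2 θ q) t := by
        rw [hratio, lazyWalkCharFun]
        linear_combination (1 - Real.cos t) * tiltedMass_mul_mu2 hβ0 hβ1 hβ2 - hmass

theorem two_mul_iidExp_halfStep_spuriousGap (hβ0 : 0 < beta0 θ q) (hβ2 : 0 < beta2 θ q)
    (hβ21 : beta2 θ q < beta1 θ q) (n : ℕ) :
    2 * iidExp (noisyChain θ q) n (fun ys => halfStep (∑ k, spuriousGap 0 1 (ys k)))
      = tiltedMass θ q ^ n * ((2 * π)⁻¹ *
        ∫ t in -π..π, lazyWalkCharFun (mu2 θ q) t ^ n * realPoissonKernel (zq θ q) t) := by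
  have hβ1 := hβ2.trans hβ21
  have hz0 := zq_pos hβ1 hβ2
  have hbalance := noisyChain_relabel_swap_one_two_mul_zpow hβ1 hβ2
  rw [two_mul_iidExp_halfStep (relabel (Equiv.swap 1 2)) spuriousGap_relabel_swap_one_two hz0.ne'
      hbalance,
    iidExp_pow_natAbs_eq_integral (relabel (Equiv.swap 1 2))
      (fun y => by rw [spuriousGap_relabel_swap_one_two, neg_neg, hbalance])
      spuriousGap_relabel_swap_one_two hz0.le (zq_lt_one hβ1 hβ21)]
  simp only [sum_tilted_noisyChain_mul_cos hβ0 hβ1 hβ2, mul_pow]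
  simp only [mul_assoc, intervalIntegral.integral_const_mul]
  ring

theorem iidExp_halfStep_spuriousGap_one_two (θ q : ℝ) (n : ℕ) :
    iidExp (noisyChain θ q) n (fun ys => halfStep (∑ k, spuriousGap 1 2 (ys k)))
      = iidExp (noisyChain θ q) n fun ys => halfStep (∑ k, spuriousGap 0 1 (ys k)) := by
  simp only [← spuriousGap_relabel_swap_zero_two]
  exact iidExp_comp n _ (noisyChain_relabel_swap_zero_two θ q)
    fun ys => halfStep (∑ k, spuriousGap 0 1 (ys k))

theorem iidExp_halfStep_spuriousGap_add (hβ0 : 0 < beta0 θ q) (hβ2 : 0 < beta2 θ q)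
    (hβ21 : beta2 θ q < beta1 θ q) (n : ℕ) :
    iidExp (noisyChain θ q) n (fun ys =>
        halfStep (∑ k, spuriousGap 0 1 (ys k)) + halfStep (∑ k, spuriousGap 1 2 (ys k)))
      = tiltedMass θ q ^ n * ((2 * π)⁻¹ *
        ∫ t in -π..π, lazyWalkCharFun (mu2 θ q) t ^ n * realPoissonKernel (zq θ q) t) := by
  rw [iidExp_add, iidExp_halfStep_spuriousGap_one_two, ← two_mul,
    two_mul_iidExp_halfStep_spuriousGap hβ0 hβ2 hβ21]

/-- The mean of `w ^ (spuriousGap 0 1 + spuriousGap 1 2)` under `noisyChain` for `w = 1 / √z`: the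
Chernoff rate at which both edges of the chain lose to or tie with the non-edge. -/
noncomputable def coincidenceRate (θ q : ℝ) : ℝ :=
  2 * beta0 θ q + 2 * (zq θ q * beta1 θ q) + 4 * (√(zq θ q) * beta1 θ q)

theorem coincidenceRate_lt_tiltedMass (hβ1 : 0 < beta1 θ q) (hβ21 : beta2 θ q < beta1 θ q) :
    coincidenceRate θ q < tiltedMass θ q := by
  have hsq : √(zq θ q) ^ 2 = zq θ q := Real.sq_sqrt (Real.sqrt_nonneg _)
  have hlt : √(zq θ q) < 1 := by
    rw [Real.sqrt_lt' one_pos, one_pow]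
    exact zq_lt_one hβ1 hβ21
  have hdiff : tiltedMass θ q - coincidenceRate θ q = 2 * beta1 θ q * (1 - √(zq θ q)) ^ 2 := by
    rw [tiltedMass, coincidenceRate]
    linear_combination -2 * beta1 θ q * hsq
  have := sub_pos.mpr hlt
  rw [← sub_pos, hdiff]
  positivity

theorem coincidenceRate_nonneg (hβ0 : 0 ≤ beta0 θ q) (hβ1 : 0 ≤ beta1 θ q) :
    0 ≤ coincidenceRate θ q := by
  have hz : 0 ≤ zq θ q := Real.sqrt_nonneg _
  unfold coincidenceRate
  positivity

theorem sum_noisyChain_mul_zpow (hβ1 : 0 < beta1 θ q) (hβ2 : 0 < beta2 θ q) :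
    ∑ y, noisyChain θ q y * (√(zq θ q))⁻¹ ^ (spuriousGap 0 1 y + spuriousGap 1 2 y)
      = coincidenceRate θ q := by
  have hz := zq_pos hβ1 hβ2
  have hsq : (√(zq θ q))⁻¹ ^ 2 = (zq θ q)⁻¹ := by rw [inv_pow, Real.sq_sqrt hz.le]
  have hcast : (√(zq θ q))⁻¹ ^ (1 + 1 : ℤ) = (zq θ q)⁻¹ := by exact_mod_cast hsq
  rw [sum_noisyChain_mul θ q fun a b => (√(zq θ q))⁻¹ ^ (a + b), hcast, add_zero, zpow_zero,
    add_zero, zero_add, zpow_neg_one, inv_inv, beta2_eq_zq_sq_mul hβ1 hβ2.le, coincidenceRate]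
  field_simp
  ring

theorem abs_ErrProbQ_sub_le (hβ0 : 0 < beta0 θ q) (hβ2 : 0 < beta2 θ q)
    (hβ21 : beta2 θ q < beta1 θ q) {n : ℕ} (hn : n ≠ 0) :
    |ErrProbQ θ q n - tiltedMass θ q ^ n * ((2 * π)⁻¹ *
        ∫ t in -π..π, lazyWalkCharFun (mu2 θ q) t ^ n * realPoissonKernel (zq θ q) t)|
      ≤ coincidenceRate θ q ^ n := by
  have hβ1 := hβ2.trans hβ21
  have hz0 := zq_pos hβ1 hβ2
  have hw : 1 ≤ (√(zq θ q))⁻¹ :=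
    (one_le_inv₀ (Real.sqrt_pos.mpr hz0)).mpr (Real.sqrt_le_one.mpr (zq_lt_one hβ1 hβ21).le)
  rw [ErrProbQ_eq_iidExp θ q hn, ← iidExp_halfStep_spuriousGap_add hβ0 hβ2 hβ21,
    ← sum_noisyChain_mul_zpow hβ1 hβ2]
  refine abs_iidExp_sub_iidExp_le (noisyChain_nonneg hβ0.le hβ1.le hβ2.le) hw fun ys => ?_
  rw [Finset.sum_add_distrib]
  exact abs_mwstLoss_sub_halfStep_add_le _ _

end Tilting

/-! ### The error probability -/

theorem tendsto_mul_sqrt_mul_of_abs_le_pow {e : ℕ → ℝ} {r : ℝ} (c : ℝ) (hr0 : 0 ≤ r) (hr1 : r < 1)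
    (he : ∀ᶠ n in atTop, |e n| ≤ r ^ n) :
    Tendsto (fun n : ℕ => (n : ℝ) * (√(c * n) * e n)) atTop (𝓝 0) := by
  have hgeom : Tendsto (fun n : ℕ => √c * ((n : ℝ) ^ 2 * r ^ n)) atTop (𝓝 (√c * 0)) :=
    (tendsto_pow_const_mul_const_pow_of_abs_lt_one 2 (by rwa [abs_of_nonneg hr0])).const_mul _
  rw [mul_zero] at hgeom
  refine squeeze_zero_norm' ?_ hgeom
  filter_upwards [he, eventually_ge_atTop 1] with n hen hn
  have hsqrt : √(n : ℝ) ≤ n := Real.sqrt_le_self_iff.mpr (.inr (by exact_mod_cast hn))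
  calc ‖(n : ℝ) * (√(c * n) * e n)‖ = n * (√c * √n * |e n|) := by
        rw [Real.norm_eq_abs, abs_mul, abs_mul, Nat.abs_cast, Real.sqrt_mul' c n.cast_nonneg,
          abs_of_nonneg (by positivity)]
    _ ≤ n * (√c * n * r ^ n) := by gcongr
    _ = √c * ((n : ℝ) ^ 2 * r ^ n) := by ring

section Normalization

variable {θ q : ℝ}

theorem hasFirstOrderExpansion_ErrProbQ (hβ0 : 0 < beta0 θ q) (hβ2 : 0 < beta2 θ q)
    (hβ21 : beta2 θ q < beta1 θ q) :
    HasFirstOrderExpansion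
      (fun n => √(2 * π * mu2 θ q * n) * (ErrProbQ θ q n / tiltedMass θ q ^ n))
      ((1 + zq θ q) / (1 - zq θ q))
      ((1 + zq θ q) / (1 - zq θ q) * ((1 - 3 * mu2 θ q) / (8 * mu2 θ q))
        - zq θ q * (1 + zq θ q) / ((1 - zq θ q) ^ 3 * mu2 θ q)) := by
  have hβ1 := hβ2.trans hβ21
  have hmass := tiltedMass_pos hβ0 hβ1
  refine (hasFirstOrderExpansion_integral_lazyWalkCharFun_pow_mul_realPoissonKernel
    (mu2_pos hβ1 hβ2) (mu2_lt_one hβ0 hβ1 hβ2) (zq_pos hβ1 hβ2).le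
    (zq_lt_one hβ1 hβ21)).of_tendsto_mul_sub ?_
  simp only [← mul_sub]
  refine tendsto_mul_sqrt_mul_of_abs_le_pow (r := coincidenceRate θ q / tiltedMass θ q) _
    (div_nonneg (coincidenceRate_nonneg hβ0.le hβ1.le) hmass.le)
    ((div_lt_one hmass).mpr (coincidenceRate_lt_tiltedMass hβ1 hβ21)) ?_
  filter_upwards [eventually_ne_atTop 0] with n hn
  rw [div_pow, le_div_iff₀ (by positivity), ← abs_of_pos (pow_pos hmass n), ← abs_mul, sub_mul,
    abs_of_pos (pow_pos hmass n), div_mul_cancel₀ _ (by positivity), mul_comm _ (_ ^ n)]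
  exact abs_ErrProbQ_sub_le hβ0 hβ2 hβ21 hn

theorem sqrt_mul_two_mul_fnq_sub_ftildeq_div (hβ0 : 0 < beta0 θ q) (hβ2 : 0 < beta2 θ q)
    (hβ21 : beta2 θ q < beta1 θ q) {n : ℕ} (hn : n ≠ 0) :
    √(2 * π * mu2 θ q * n) * ((2 * fnq θ q n - ftildeq θ q n) / tiltedMass θ q ^ n)
      = (1 + (1 - 3 * mu2 θ q) / (8 * mu2 θ q) / n) * ((2 / (1 - zq θ q) - 1)
        + -(zq θ q * (1 + zq θ q) / ((1 - zq θ q) ^ 3 * mu2 θ q)) / n) := by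
  have hβ1 := hβ2.trans hβ21
  have hmass := tiltedMass_pos hβ0 hβ1
  have hμ := mu2_pos hβ1 hβ2
  have hz := (sub_pos.mpr (zq_lt_one hβ1 hβ21)).ne'
  have hexp : Real.exp (-(n : ℝ) * Kq θ q) = tiltedMass θ q ^ n := by
    rw [Kq_eq_neg_log_tiltedMass hβ1 hβ2, neg_mul_neg, Real.exp_nat_mul, Real.exp_log hmass]
  have hsqrt : √(2 * π * mu2 θ q * n) ≠ 0 := by positivity
  rw [fnq, ftildeq, hexp]
  generalize √(2 * π * mu2 θ q * n) = s at *
  field_simp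
  ring

theorem hasFirstOrderExpansion_two_mul_fnq_sub_ftildeq (hβ0 : 0 < beta0 θ q) (hβ2 : 0 < beta2 θ q)
    (hβ21 : beta2 θ q < beta1 θ q) :
    HasFirstOrderExpansion
      (fun n => √(2 * π * mu2 θ q * n) * ((2 * fnq θ q n - ftildeq θ q n) / tiltedMass θ q ^ n))
      ((1 + zq θ q) / (1 - zq θ q))
      ((1 + zq θ q) / (1 - zq θ q) * ((1 - 3 * mu2 θ q) / (8 * mu2 θ q))
        - zq θ q * (1 + zq θ q) / ((1 - zq θ q) ^ 3 * mu2 θ q)) := by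
  have hβ1 := hβ2.trans hβ21
  have hlead : 2 / (1 - zq θ q) - 1 = (1 + zq θ q) / (1 - zq θ q) := by
    have := (sub_pos.mpr (zq_lt_one hβ1 hβ21)).ne'
    field_simp
    ring
  convert ((hasFirstOrderExpansion_add_div 1 _).mul (hasFirstOrderExpansion_add_div _ _)).congr' <|
    (eventually_ne_atTop 0).mono fun n hn =>
      (sqrt_mul_two_mul_fnq_sub_ftildeq_div hβ0 hβ2 hβ21 hn).symm using 1
  · rw [hlead, one_mul]
  · rw [hlead]
    ring

end Normalization

theorem stmt19_general (θ q : ℝ) (hθ0 : 0 < θ) (hθ1 : θ < 1 / 2) (hq0 : 0 ≤ q) (hq1 : q ≤ 1)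
    (hq : q ≠ 1 / 2) :
    Tendsto (fun n : ℕ => (n : ℝ) * (ErrProbQ θ q n / (2 * fnq θ q n - ftildeq θ q n) - 1))
      atTop (𝓝 0) := by
  have hβ0 : 0 < beta0 θ q := beta0_pos hθ0.le (by linarith) hq0 hq1
  have hβ2 : 0 < beta2 θ q := beta2_pos hθ0 (by linarith) hq0 hq1
  have hβ21 : beta2 θ q < beta1 θ q := beta2_lt_beta1 hθ0 hθ1 hq
  have hβ1 := hβ2.trans hβ21
  have hlead : (1 + zq θ q) / (1 - zq θ q) ≠ 0 :=
    (div_pos (by linarith [zq_pos hβ1 hβ2]) (sub_pos.mpr (zq_lt_one hβ1 hβ21))).ne'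
  refine ((hasFirstOrderExpansion_ErrProbQ hβ0 hβ2 hβ21).div_of_same
    (hasFirstOrderExpansion_two_mul_fnq_sub_ftildeq hβ0 hβ2 hβ21) hlead).congr' ?_
  filter_upwards [eventually_ne_atTop 0] with n hn
  have hmass := tiltedMass_pos hβ0 hβ1
  have hμ := mu2_pos hβ1 hβ2
  rw [mul_div_mul_left _ _ (by positivity), div_div_div_cancel_right₀ (by positivity)]

/-- exact asymptotics of the error probability of the tie-breaking MWST
estimator with noisy samples: `Err_n^{(q)} = (2f^{(q)}(n) - f̃^{(q)}(n))(1 + o(n⁻¹))`. -/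
theorem stmt19 (θ q : ℝ) (hθ0 : 0 < θ) (hθ1 : θ < 1 / 2) (hq0 : 0 ≤ q) (hq1 : q < 1 / 2) :
    Filter.Tendsto (fun n : ℕ =>
      (n : ℝ) * (ErrProbQ θ q n / (2 * fnq θ q n - ftildeq θ q n) - 1))
      Filter.atTop (nhds 0) := by
  exact stmt19_general θ q hθ0 hθ1 hq0 (by linarith) hq1.ne
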